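/- Let A₁, A'₁, A₂, A'₂ be objects of A with A₁ = A'₂, and let f_j : A_j → A'_j (j = 1, 2) be morphisms in K^b(A)/𝔻 presented as f_j = g_j ∘ s_j⁻¹ ∘ i_j, where C_j, C'_j are objects of A, g_j ∈ A(C'_j, A'_j), s_j ∈ A(C'_j, C_j) with Cone(s_j) ∈ D, and i_j ∈ A(A_j, C_j). Then f₁ ∘ f₂ = (0, g₁) ∘ M⁻¹ ∘ (i₂; 0), where M : C'₂ ⊕ C'₁ → C₂ ⊕ C₁ is the matrix morphism with rows (s₂, 0) and (−i₁ ∘ g₂, s₁), (0, g₁) : C'₂ ⊕ C'₁ → A'₁ and (i₂; 0) : A₂ → C₂ ⊕ C₁ are the indicated matrix morphisms, and M becomes invertible in K^b(A)/𝔻. -/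

import Mathlib

open CategoryTheory Limits Pretriangulated ZeroObject

universe v u v' u'

section TriangulatedPrelude

variable {C : Type u} [Category.{v} C] [HasZeroObject C] [HasShift C ℤ] [Preadditive C]
  [∀ n : ℤ, (shiftFunctor C n).Additive] [Pretriangulated C]

/-- The objects of the smallest strict full triangulated subcategory of `C`
containing the set of objects `B`. -/
inductive genSub (B : Set C) : C → Prop
  | of (X : C) (hX : X ∈ B) : genSub B X
  | zero (X : C) (hX : IsZero X) : genSub B X
  | shift (X : C) (n : ℤ) (hX : genSub B X) : genSub B (X⟦n⟧)
  | ext₂ (T : Triangle C) (hT : T ∈ distTriang C) (h₁ : genSub B T.obj₁)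
      (h₃ : genSub B T.obj₃) : genSub B T.obj₂

/-- The triangulated subcategory of `C` generated by `B`. -/
def genSubcat (B : Set C) : ObjectProperty C :=
  genSub B

instance (B : Set C) : (genSubcat B).IsTriangulated where
  exists_zero := ⟨0, isZero_zero _, genSub.zero _ (isZero_zero _)⟩
  isStableUnderShiftBy n := ⟨fun X h => genSub.shift X n h⟩
  ext₂' T hT h₁ h₃ :=
    ObjectProperty.le_isoClosure (genSubcat B) _ (genSub.ext₂ T hT h₁ h₃)

/-- The extension-closure of a class of objects `E`: the smallest class containing `E`
and `0` and such that for any distinguished triangle `X ⟶ Y ⟶ Z` with `X, Z` in the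
class, `Y` is also in the class. -/
inductive extClosure (E : Set C) : C → Prop
  | of (X : C) (hX : X ∈ E) : extClosure E X
  | zero (X : C) (hX : IsZero X) : extClosure E X
  | ext₂ (T : Triangle C) (hT : T ∈ distTriang C) (h₁ : extClosure E T.obj₁)
      (h₃ : extClosure E T.obj₃) : extClosure E T.obj₂

/-- `D_{[i,j]}`: the extension-closure of `∪_{i ≤ l ≤ j} D[l]`. -/
def shiftClosure (D : Set C) (i j : ℤ) : Set C :=
  extClosure {X | ∃ (Y : C) (l : ℤ), i ≤ l ∧ l ≤ j ∧ Y ∈ D ∧ X = Y⟦l⟧}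

/-- `D_{≥ i} = ∪_{k ≥ i} D_{[i,k]}`. -/
def shiftClosureGE (D : Set C) (i : ℤ) : Set C := {X | ∃ k, i ≤ k ∧ X ∈ shiftClosure D i k}

/-- `D_{≤ j} = ∪_{k ≤ j} D_{[k,j]}`. -/
def shiftClosureLE (D : Set C) (j : ℤ) : Set C := {X | ∃ k, k ≤ j ∧ X ∈ shiftClosure D k j}

/-- A set of objects `D` is weakly negative if `0 ∈ D` and `Hom(X, Y[i]) = 0`
for all `X, Y ∈ D` and all `i ≥ 2`. -/
def WeaklyNegative (D : Set C) : Prop :=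
  (0 : C) ∈ D ∧ ∀ X ∈ D, ∀ Y ∈ D, ∀ i : ℤ, 2 ≤ i → ∀ f : X ⟶ (Y⟦i⟧), f = 0

end TriangulatedPrelude

attribute [local instance] Limits.hasBinaryBiproducts_of_finite_biproducts

section KPrelude

variable {A : Type u} [Category.{v} A] [Preadditive A] [HasZeroObject A] [HasFiniteBiproducts A]

/-- The two-term cochain complex with `P` in degree `n` and `Q` in degree `n + 1`,
with differential given by `f : P ⟶ Q` (and all other terms `0`).
In particular, `twoComplex (-1) f` is the cone of a morphism `f` of `A`. -/
noncomputable def twoComplex (n : ℤ) {P Q : A} (f : P ⟶ Q) : CochainComplex A ℤ where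
  X i := if i = n then P else if i = n + 1 then Q else 0
  d i j :=
    if hij : i = n ∧ j = n + 1 then
      eqToHom (by simp [hij.1]) ≫ f ≫
        eqToHom (by simp [hij.2, show ¬ ((n : ℤ) + 1 = n) by omega])
    else 0
  shape i j hij := by
    rw [dif_neg]
    rintro ⟨rfl, rfl⟩
    exact hij rfl
  d_comp_d' i j k _ _ := by
    by_cases h1 : i = n ∧ j = n + 1
    · by_cases h2 : j = n ∧ k = n + 1
      · obtain ⟨h1a, h1b⟩ := h1; obtain ⟨h2a, h2b⟩ := h2; omega
      · rw [dif_neg h2, comp_zero]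
    · rw [dif_neg h1, zero_comp]

/-- The chain map from the two-term complex (in degrees `n`, `n + 1`) determined by
`f : P ⟶ Q` to the complex concentrated in degree `n` with value `M`, whose degree `n`
component is `g : P ⟶ M`. -/
noncomputable def twoComplexToSingle (n : ℤ) {P Q M : A} (f : P ⟶ Q) (g : P ⟶ M) :
    twoComplex n f ⟶ (HomologicalComplex.single A (ComplexShape.up ℤ) n).obj M where
  f i :=
    if h : i = n then
      eqToHom (by simp [twoComplex, h]) ≫ g ≫
        (HomologicalComplex.singleObjXSelf (ComplexShape.up ℤ) n M).inv ≫ eqToHom (by rw [h])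
    else 0
  comm' i j hij := by
    simp only [ComplexShape.up_Rel] at hij
    by_cases hj : j = n
    · have hi : ¬ (i = n ∧ j = n + 1) := by rintro ⟨rfl, rfl⟩; omega
      have hd : (twoComplex n f).d i j = 0 := by
        dsimp [twoComplex]; rw [dif_neg hi]; rfl
      rw [hd, zero_comp]
      have : i ≠ n := by omega
      rw [dif_neg this, zero_comp]
    · rw [dif_neg hj]
      rw [comp_zero]
      have : ((HomologicalComplex.single A (ComplexShape.up ℤ) n).obj M).d i j = 0 := by simp
      rw [this, comp_zero]

/-- The quotient functor `C^b(A) ⥤ K(A)` (restricted from all complexes). -/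
noncomputable abbrev homotopyQ : CochainComplex A ℤ ⥤ HomotopyCategory A (ComplexShape.up ℤ) :=
  HomotopyCategory.quotient A (ComplexShape.up ℤ)

/-- The canonical embedding of `A` into the homotopy category, as complexes concentrated
in degree `0`. -/
noncomputable abbrev iotaA : A ⥤ HomotopyCategory A (ComplexShape.up ℤ) :=
  HomologicalComplex.single A (ComplexShape.up ℤ) 0 ⋙ homotopyQ

/-- `B`: the set of cones of elements of `S`, viewed in the homotopy category. -/
def coneSet (S : MorphismProperty A) : Set (HomotopyCategory A (ComplexShape.up ℤ)) :=
  {X | ∃ (P Q : A) (s : P ⟶ Q), S s ∧ X = homotopyQ.obj (twoComplex (-1) s)}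

/-- The Verdier localization functor of the homotopy category by the triangulated
subcategory `𝔻` generated by the cones of elements of `S`. -/
noncomputable abbrev locQ (S : MorphismProperty A) :
    HomotopyCategory A (ComplexShape.up ℤ) ⥤ (genSubcat (coneSet S)).trW.Localization :=
  (genSubcat (coneSet S)).trW.Q

/-- The composite functor `A ⥤ K(A) ⥤ K(A)/𝔻`. -/
noncomputable abbrev uBig (S : MorphismProperty A) :
    A ⥤ (genSubcat (coneSet S)).trW.Localization :=
  iotaA ⋙ locQ S

/-- `A[S⁻¹]_add`: the full subcategory of the Verdier quotient whose
objects are those of `A` (viewed as complexes concentrated in degree `0`). -/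
def AddLoc (S : MorphismProperty A) : Type u := A

noncomputable instance (S : MorphismProperty A) : Category (AddLoc S) where
  Hom X Y := (uBig S).obj X ⟶ (uBig S).obj Y
  id X := 𝟙 ((uBig S).obj X)
  comp f g := f ≫ g

/-- The canonical functor `u : A ⥤ A[S⁻¹]_add` induced by the localization functor. -/
noncomputable def uFun (S : MorphismProperty A) : A ⥤ AddLoc S where
  obj X := X
  map f := (uBig S).map f
  map_id X := (uBig S).map_id X
  map_comp f g := (uBig S).map_comp f g

noncomputable instance (S : MorphismProperty A) : Preadditive (AddLoc S) where
  homGroup X Y := inferInstanceAs (AddCommGroup ((uBig S).obj X ⟶ (uBig S).obj Y))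
  add_comp P Q R f f' g :=
    @Preadditive.add_comp _ _ _ ((uBig S).obj P) ((uBig S).obj Q) ((uBig S).obj R) f f' g
  comp_add P Q R f g g' :=
    @Preadditive.comp_add _ _ _ ((uBig S).obj P) ((uBig S).obj Q) ((uBig S).obj R) f g g'

end KPrelude

theorem key13 {A : Type u} [Category.{v} A] [Preadditive A] [HasBinaryBiproducts A]
    {E : Type u'} [Category.{v'} E] [Preadditive E] (F : A ⥤ E) [F.Additive]
    (A₂ A₁ A'₁ C₁ C'₁ C₂ C'₂ : A)
    (g₁ : C'₁ ⟶ A'₁) (s₁ : C'₁ ⟶ C₁) (i₁ : A₁ ⟶ C₁)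
    (g₂ : C'₂ ⟶ A₁) (s₂ : C'₂ ⟶ C₂) (i₂ : A₂ ⟶ C₂)
    [IsIso (F.map s₁)] [IsIso (F.map s₂)] :
    IsIso (F.map
      (biprod.desc (biprod.lift s₂ (-(g₂ ≫ i₁))) (biprod.lift 0 s₁))) ∧
    ∃ e : F.obj (C₂ ⊞ C₁) ⟶ F.obj A'₁,
      F.map (biprod.desc (biprod.lift s₂ (-(g₂ ≫ i₁))) (biprod.lift 0 s₁)) ≫ e =
        F.map (biprod.desc 0 g₁) ∧
      (F.map i₂ ≫ inv (F.map s₂) ≫ F.map g₂) ≫ F.map i₁ ≫ inv (F.map s₁) ≫ F.map g₁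
        = F.map (biprod.lift i₂ (0 : A₂ ⟶ C₁)) ≫ e := by
  have hM : F.map (biprod.desc (biprod.lift s₂ (-(g₂ ≫ i₁))) (biprod.lift 0 s₁)) =
      F.map biprod.fst ≫ F.map s₂ ≫ F.map biprod.inl
      - F.map biprod.fst ≫ F.map g₂ ≫ F.map i₁ ≫ F.map biprod.inr
      + F.map biprod.snd ≫ F.map s₁ ≫ F.map biprod.inr := by
    simp only [← F.map_comp, ← F.map_sub, ← F.map_add]
    congr 1
    ext <;> simp
  have z1 : ∀ {X Y : A}, F.map (biprod.inl : X ⟶ X ⊞ Y) ≫ F.map biprod.snd = 0 := by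
    intro X Y; rw [← F.map_comp]; simp
  have z2 : ∀ {X Y : A}, F.map (biprod.inr : Y ⟶ X ⊞ Y) ≫ F.map biprod.fst = 0 := by
    intro X Y; rw [← F.map_comp]; simp
  have o1 : ∀ {X Y : A}, F.map (biprod.inl : X ⟶ X ⊞ Y) ≫ F.map biprod.fst = 𝟙 _ := by
    intro X Y; rw [← F.map_comp]; simp
  have o2 : ∀ {X Y : A}, F.map (biprod.inr : Y ⟶ X ⊞ Y) ≫ F.map biprod.snd = 𝟙 _ := by
    intro X Y; rw [← F.map_comp]; simp
  have tot : ∀ {X Y : A}, F.map (biprod.fst : X ⊞ Y ⟶ X) ≫ F.map biprod.inl +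
      F.map biprod.snd ≫ F.map biprod.inr = 𝟙 _ := by
    intro X Y; rw [← F.map_comp, ← F.map_comp, ← F.map_add]; simp
  have z1' := fun {X Y : A} {Z : E} (h : _ ⟶ Z) => (reassoc_of% (@z1 X Y)) h
  have z2' := fun {X Y : A} {Z : E} (h : _ ⟶ Z) => (reassoc_of% (@z2 X Y)) h
  have o1' := fun {X Y : A} {Z : E} (h : _ ⟶ Z) => (reassoc_of% (@o1 X Y)) h
  have o2' := fun {X Y : A} {Z : E} (h : _ ⟶ Z) => (reassoc_of% (@o2 X Y)) h
  rw [hM]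
  refine ⟨⟨F.map biprod.fst ≫ inv (F.map s₂) ≫ F.map biprod.inl
      + F.map biprod.fst ≫ inv (F.map s₂) ≫ F.map g₂ ≫ F.map i₁ ≫ inv (F.map s₁) ≫ F.map biprod.inr
      + F.map biprod.snd ≫ inv (F.map s₁) ≫ F.map biprod.inr, ?_, ?_⟩,
    F.map biprod.fst ≫ inv (F.map s₂) ≫ F.map g₂ ≫ F.map i₁ ≫ inv (F.map s₁) ≫ F.map g₁
      + F.map biprod.snd ≫ inv (F.map s₁) ≫ F.map g₁, ?_, ?_⟩
  · rw [← tot]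
    simp [z1', z2', o1', o2']
  · rw [← tot]
    simp [z1', z2', o1', o2']
    abel
  · have : F.map (biprod.desc (0 : C'₂ ⟶ A'₁) g₁) = F.map biprod.snd ≫ F.map g₁ := by
      rw [← F.map_comp]; congr 1; ext <;> simp
    rw [this]
    simp [z1', z2', o1', o2']
  · have : F.map (biprod.lift i₂ (0 : A₂ ⟶ C₁)) = F.map i₂ ≫ F.map biprod.inl := by
      rw [← F.map_comp]; congr 1; ext <;> simp
    rw [this]
    simp [z1', z2', o1', o2']

/-- Proposition: composition of morphisms of `K^b(A)/𝔻` presented in the form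
`g ∘ s⁻¹ ∘ i` (with `Cone(s) ∈ D`): the composite `f₁ ∘ f₂` equals
`(0, g₁) ∘ M⁻¹ ∘ (i₂; 0)` for the indicated matrix morphism `M`, which becomes
invertible in the quotient. -/
theorem statement13 {A : Type u} [Category.{v} A] [Preadditive A] [HasZeroObject A]
    [HasFiniteBiproducts A] (S : MorphismProperty A)
    (A₂ A₁ A'₁ C₁ C'₁ C₂ C'₂ : A)
    (g₁ : C'₁ ⟶ A'₁) (s₁ : C'₁ ⟶ C₁) (i₁ : A₁ ⟶ C₁)
    (g₂ : C'₂ ⟶ A₁) (s₂ : C'₂ ⟶ C₂) (i₂ : A₂ ⟶ C₂)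
    (hD₁ : extClosure (coneSet S) (homotopyQ.obj (twoComplex (-1) s₁)))
    (hD₂ : extClosure (coneSet S) (homotopyQ.obj (twoComplex (-1) s₂)))
    [IsIso ((uBig S).map s₁)] [IsIso ((uBig S).map s₂)]
    (f₁ : (uBig S).obj A₁ ⟶ (uBig S).obj A'₁)
    (f₂ : (uBig S).obj A₂ ⟶ (uBig S).obj A₁)
    (hf₁ : f₁ = (uBig S).map i₁ ≫ inv ((uBig S).map s₁) ≫ (uBig S).map g₁)
    (hf₂ : f₂ = (uBig S).map i₂ ≫ inv ((uBig S).map s₂) ≫ (uBig S).map g₂) :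
    IsIso ((uBig S).map
      (biprod.desc (biprod.lift s₂ (-(g₂ ≫ i₁))) (biprod.lift 0 s₁))) ∧
    ∃ e : (uBig S).obj (C₂ ⊞ C₁) ⟶ (uBig S).obj A'₁,
      (uBig S).map (biprod.desc (biprod.lift s₂ (-(g₂ ≫ i₁))) (biprod.lift 0 s₁)) ≫ e =
        (uBig S).map (biprod.desc 0 g₁) ∧
      f₂ ≫ f₁ = (uBig S).map (biprod.lift i₂ (0 : A₂ ⟶ C₁)) ≫ e := by
  subst hf₁ hf₂
  exact key13 (uBig S) A₂ A₁ A'₁ C₁ C'₁ C₂ C'₂ g₁ s₁ i₁ g₂ s₂ i₂
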